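/- Let F(ω) = (1/√θ) exp(−ω²/(2θ)) for θ > 0 and ω ∈ ℝ (the spectral density of a squared exponential covariance function). Then there exists ε > 0 such that for all θ > 0 and h > 0 with θh² < ε: (4/3) h √θ exp(−1/(8h²θ)) ≤ σ_h²(F) ≤ 7 h √θ exp(−1/(8h²θ)). -/

import Mathlib

open MeasureTheory Real

/-- The optimal mean integrated interpolation error for a stationary Gaussian
process with spectral density `F` observed on the grid `hℤ`:
`σ_h²(F) = ∫ℝ F(ω) (∑_{k ≠ 0} F(ω + k/h)) / (∑_{k ∈ ℤ} F(ω + k/h)) dω`.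
(Division by zero is `0` in Lean, so the integrand is `0` where the denominator
vanishes, as in the convention of the paper.) -/
noncomputable def sigmaSq (h : ℝ) (F : ℝ → ℝ) : ℝ :=
  ∫ ω : ℝ, F ω * (∑' k : {k : ℤ // k ≠ 0}, F (ω + (k.1 : ℝ) / h)) /
    (∑' k : ℤ, F (ω + (k : ℝ) / h))

lemma aux_natAbs_le_sq (k : ℤ) : ((k.natAbs : ℕ) : ℝ) ≤ (k : ℝ) ^ 2 := by
  rw [Nat.cast_natAbs]
  have : |k| ≤ k ^ 2 := by
    rw [← sq_abs]
    exact_mod_cast Int.le_self_sq _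
  exact_mod_cast this


lemma aux_tsum_split (f : ℤ → ℝ) (hf : Summable f) :
    ∑' k, f k = f 0 + ∑' k : {k : ℤ // k ≠ 0}, f k.1 := by
  have h := hf.tsum_subtype_add_tsum_subtype_compl {0}
  rw [← h]
  congr 1
  simp

lemma aux_hasSum_geom (q : ℝ) (h0 : 0 ≤ q) (h1 : q < 1) :
    HasSum (fun k : ℤ => q ^ k.natAbs) ((1 - q)⁻¹ + q * (1 - q)⁻¹) := by
  apply HasSum.of_nat_of_neg_add_one
  · simpa using hasSum_geometric_of_lt_one h0 h1
  · have := (hasSum_geometric_of_lt_one h0 h1).mul_left q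
    convert! this using 2 with n
    rw [show (-((n : ℤ) + 1)).natAbs = n + 1 by omega]
    ring

lemma aux_geom_tsum (q : ℝ) (h0 : 0 ≤ q) (h1 : q < 1) :
    Summable (fun k : {k : ℤ // k ≠ 0} => q ^ k.1.natAbs) ∧
    ∑' k : {k : ℤ // k ≠ 0}, q ^ k.1.natAbs = 2 * q / (1 - q) := by
  have h := aux_hasSum_geom q h0 h1
  refine ⟨h.summable.subtype _, ?_⟩
  have h2 := aux_tsum_split _ h.summable
  rw [h.tsum_eq] at h2
  simp only [Int.natAbs_zero, pow_zero] at h2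
  have : 1 - q ≠ 0 := by linarith
  have h3 : (1 - q)⁻¹ + q * (1 - q)⁻¹ = 1 + 2 * q / (1 - q) := by field_simp; ring
  linarith

lemma aux_sech : Integrable (fun u : ℝ => 1 / (2 * cosh u)) ∧
    ∫ u : ℝ, 1 / (2 * cosh u) = π / 2 := by
  have e : ∀ u : ℝ, |exp u| • (1 + (exp u) ^ 2)⁻¹ = 1 / (2 * cosh u) := by
    intro u
    rw [abs_of_pos (exp_pos u), smul_eq_mul, cosh_eq, exp_neg]
    have := exp_pos u
    field_simp
    ring
  have A := integrableOn_image_iff_integrableOn_abs_deriv_smul (s := Set.univ) (f := exp) (f' := exp)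
    MeasurableSet.univ (fun x _ => (hasDerivAt_exp x).hasDerivWithinAt) exp_injective.injOn
    (fun x : ℝ => (1 + x ^ 2)⁻¹)
  have B := integral_image_eq_integral_abs_deriv_smul (s := Set.univ) (f := exp) (f' := exp)
    MeasurableSet.univ (fun x _ => (hasDerivAt_exp x).hasDerivWithinAt) exp_injective.injOn
    (fun x : ℝ => (1 + x ^ 2)⁻¹)
  simp only [e, Set.image_univ, range_exp, integrableOn_univ, setIntegral_univ] at A B
  refine ⟨A.1 integrable_inv_one_add_sq.integrableOn, ?_⟩
  rw [← B, integral_Ioi_inv_one_add_sq]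
  simp

lemma aux_sech' (a : ℝ) (ha : a ≠ 0) : Integrable (fun u : ℝ => 1 / (2 * cosh (a * u))) ∧
    ∫ u : ℝ, 1 / (2 * cosh (a * u)) = π / (2 * |a|) := by
  refine ⟨aux_sech.1.comp_mul_left' ha, ?_⟩
  rw [Measure.integral_comp_mul_left (fun u => 1 / (2 * cosh u)) a, aux_sech.2, abs_inv, smul_eq_mul]
  have : |a| ≠ 0 := by simpa using ha
  field_simp

/-- the density -/
noncomputable def auxF (θ ω : ℝ) : ℝ := (1 / √θ) * exp (-ω ^ 2 / (2 * θ))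

lemma auxF_pos (θ ω : ℝ) (h : 0 < θ) : 0 < auxF θ ω := by
  unfold auxF; positivity

lemma auxF_meas (θ c : ℝ) : Measurable (fun ω => auxF θ (ω + c)) := by
  unfold auxF; fun_prop

lemma auxF_int (θ : ℝ) (h : 0 < θ) : Integrable (auxF θ) := by
  have := (integrable_exp_neg_mul_sq (b := 1 / (2 * θ)) (by positivity)).const_mul (1 / √θ)
  refine this.congr (Filter.Eventually.of_forall fun ω => ?_)
  simp only [auxF]
  congr 2
  ring

/-- two-term harmonic mean -/
noncomputable def auxP (θ c ω : ℝ) : ℝ :=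
  auxF θ ω * auxF θ (ω + c) / (auxF θ ω + auxF θ (ω + c))

lemma auxP_pos (θ c ω : ℝ) (h : 0 < θ) : 0 < auxP θ c ω := by
  have := auxF_pos θ ω h
  have := auxF_pos θ (ω + c) h
  unfold auxP; positivity

lemma auxP_shift (θ c t : ℝ) (h : 0 < θ) :
    auxP θ c (t + -(c / 2)) = (1 / √θ * exp (-c ^ 2 / (8 * θ))) *
      (exp (-t ^ 2 / (2 * θ)) * (1 / (2 * cosh (c / (2 * θ) * t)))) := by
  have hs : 0 < √θ := sqrt_pos.2 h
  have e1 : auxF θ (t + -(c / 2)) = 1 / √θ * (exp (-c ^ 2 / (8 * θ)) *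
      exp (-t ^ 2 / (2 * θ)) * exp (c / (2 * θ) * t)) := by
    unfold auxF
    rw [← exp_add, ← exp_add]
    congr 2
    field_simp
    ring
  have e2 : auxF θ (t + -(c / 2) + c) = 1 / √θ * (exp (-c ^ 2 / (8 * θ)) *
      exp (-t ^ 2 / (2 * θ)) * (exp (c / (2 * θ) * t))⁻¹) := by
    unfold auxF
    rw [← exp_neg, ← exp_add, ← exp_add]
    congr 2
    field_simp
    ring
  unfold auxP
  rw [e1, e2, cosh_eq, exp_neg]
  have := exp_pos (c / (2 * θ) * t)
  have := exp_pos (-t ^ 2 / (2 * θ))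
  have := exp_pos (-c ^ 2 / (8 * θ))
  generalize exp (c / (2 * θ) * t) = x at *
  generalize exp (-t ^ 2 / (2 * θ)) = y at *
  generalize exp (-c ^ 2 / (8 * θ)) = z at *
  have : x ^ 2 + 1 ≠ 0 := by positivity
  field_simp

lemma auxP_meas (θ c : ℝ) : Measurable (auxP θ c) := by
  unfold auxP auxF; fun_prop

lemma auxP_int (θ c : ℝ) (h : 0 < θ) (hc : c ≠ 0) : Integrable (auxP θ c) ∧
    ∫ ω, auxP θ c ω ≤ π * √θ / |c| * exp (-c ^ 2 / (8 * θ)) := by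
  have hs : 0 < √θ := sqrt_pos.2 h
  have ha : c / (2 * θ) ≠ 0 := by positivity
  obtain ⟨I, J⟩ := aux_sech' _ ha
  have hm : Measurable (fun t => (exp (-t ^ 2 / (2 * θ)) * (1 / (2 * cosh (c / (2 * θ) * t))))) := by
    have := measurable_cosh
    fun_prop
  have hle : ∀ t, (exp (-t ^ 2 / (2 * θ)) * (1 / (2 * cosh (c / (2 * θ) * t)))) ≤
      1 / (2 * cosh (c / (2 * θ) * t)) := by
    intro t
    have := cosh_pos (c / (2 * θ) * t)
    have h1 : exp (-t ^ 2 / (2 * θ)) ≤ 1 := by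
      rw [exp_le_one_iff, neg_div]
      have : 0 ≤ t ^ 2 / (2 * θ) := by positivity
      linarith
    exact mul_le_of_le_one_left (by positivity) h1
  have hnn : ∀ t, 0 ≤ (exp (-t ^ 2 / (2 * θ)) * (1 / (2 * cosh (c / (2 * θ) * t)))) := by
    intro t
    have := cosh_pos (c / (2 * θ) * t)
    positivity
  have K : Integrable (fun t => (exp (-t ^ 2 / (2 * θ)) * (1 / (2 * cosh (c / (2 * θ) * t))))) := by
    refine I.mono' hm.aestronglyMeasurable (Filter.Eventually.of_forall fun t => ?_)
    rw [norm_of_nonneg (hnn t)]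
    exact hle t
  have L : Integrable (fun t => auxP θ c (t + -(c / 2))) := by
    simp_rw [auxP_shift θ c _ h]
    exact K.const_mul _
  constructor
  · have := L.comp_add_right (c / 2)
    simpa using this
  · rw [← integral_add_right_eq_self (auxP θ c) (-(c / 2))]
    simp_rw [auxP_shift θ c _ h]
    rw [integral_const_mul]
    have M := integral_mono K I hle
    rw [J] at M
    refine (mul_le_mul_of_nonneg_left M (by positivity)).trans (le_of_eq ?_)
    rw [abs_div, abs_of_pos (show 0 < 2 * θ by positivity)]
    have : |c| ≠ 0 := by simpa using hc
    have hh : √θ ^ 2 = θ := sq_sqrt h.le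
    field_simp
    rw [hh]

lemma auxP_lower (θ c : ℝ) (h : 0 < θ) (hc : c ≠ 0) :
    (1 / √θ * exp (-c ^ 2 / (8 * θ))) * (1 / 2 * √(π / (1 / (2 * θ) + c ^ 2 / (8 * θ ^ 2)))) ≤
      ∫ ω, auxP θ c ω := by
  rw [← integral_gaussian, ← integral_const_mul, ← integral_const_mul,
    ← integral_add_right_eq_self (auxP θ c) (-(c / 2))]
  have hb : 0 < 1 / (2 * θ) + c ^ 2 / (8 * θ ^ 2) := by positivity
  refine integral_mono (((integrable_exp_neg_mul_sq hb).const_mul _).const_mul _)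
    ((auxP_int θ c h hc).1.comp_add_right _) fun t => ?_
  simp only
  rw [auxP_shift θ c t h]
  refine mul_le_mul_of_nonneg_left ?_ (by positivity)
  have h1 : cosh (c / (2 * θ) * t) ≤ exp ((c / (2 * θ) * t) ^ 2 / 2) := cosh_le_exp_half_sq _
  have h0 := cosh_pos (c / (2 * θ) * t)
  have h2 : exp (-(1 / (2 * θ) + c ^ 2 / (8 * θ ^ 2)) * t ^ 2) =
      exp (-t ^ 2 / (2 * θ)) * (exp ((c / (2 * θ) * t) ^ 2 / 2))⁻¹ := by
    rw [← exp_neg, ← exp_add]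
    congr 1
    field_simp
    ring
  rw [h2]
  have h3 : (exp ((c / (2 * θ) * t) ^ 2 / 2))⁻¹ ≤ (cosh (c / (2 * θ) * t))⁻¹ :=
    inv_anti₀ h0 h1
  have h4 := exp_pos (-t ^ 2 / (2 * θ))
  have : 1 / (2 * cosh (c / (2 * θ) * t)) = 1 / 2 * (cosh (c / (2 * θ) * t))⁻¹ := by
    field_simp
  rw [this]
  have := mul_le_mul_of_nonneg_left h3 h4.le
  linarith

lemma auxF_summable (θ h ω : ℝ) (hθ : 0 < θ) (hh : 0 < h) :
    Summable (fun k : ℤ => auxF θ (ω + (k : ℝ) / h)) := by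
  have hq : exp (-(1 / (4 * h ^ 2 * θ))) < 1 := by
    rw [exp_lt_one_iff]
    have : 0 < 1 / (4 * h ^ 2 * θ) := by positivity
    linarith
  have S := ((aux_hasSum_geom _ (exp_pos _).le hq).summable).mul_left
    (1 / √θ * exp (ω ^ 2 / (2 * θ)))
  refine Summable.of_nonneg_of_le (fun k => (auxF_pos _ _ hθ).le) (fun k => ?_) S
  unfold auxF
  rw [mul_assoc]
  refine mul_le_mul_of_nonneg_left ?_ (by positivity)
  rw [← exp_nat_mul, ← exp_add, exp_le_exp]
  have hk : ((k.natAbs : ℕ) : ℝ) ≤ (k : ℝ) ^ 2 := aux_natAbs_le_sq k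
  have e : ω ^ 2 / (2 * θ) + (k.natAbs : ℝ) * -(1 / (4 * h ^ 2 * θ)) - -(ω + k / h) ^ 2 / (2 * θ) =
      ((2 * ω + k / h) ^ 2 / 2 + ((k : ℝ) ^ 2 - (k.natAbs : ℝ)) / (2 * h ^ 2)) / (2 * θ) := by
    field_simp
    ring
  have : 0 ≤ ((2 * ω + k / h) ^ 2 / 2 + ((k : ℝ) ^ 2 - (k.natAbs : ℝ)) / (2 * h ^ 2)) / (2 * θ) := by
    have : 0 ≤ (k : ℝ) ^ 2 - (k.natAbs : ℝ) := by linarith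
    positivity
  linarith

/-- the integrand -/
noncomputable def auxG (θ h ω : ℝ) : ℝ :=
  auxF θ ω * (∑' k : {k : ℤ // k ≠ 0}, auxF θ (ω + (k.1 : ℝ) / h)) /
    (∑' k : ℤ, auxF θ (ω + (k : ℝ) / h))

lemma auxG_meas (θ h : ℝ) : Measurable (auxG θ h) := by
  unfold auxG
  have h1 : Measurable (fun ω => ∑' k : {k : ℤ // k ≠ 0}, auxF θ (ω + (k.1 : ℝ) / h)) :=
    Measurable.tsum fun k => auxF_meas _ _
  have h2 : Measurable (fun ω => ∑' k : ℤ, auxF θ (ω + (k : ℝ) / h)) :=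
    Measurable.tsum fun k => auxF_meas _ _
  have h3 : Measurable (auxF θ) := by simpa using auxF_meas θ 0
  exact (h3.mul h1).div h2

lemma auxG_facts (θ h ω : ℝ) (hθ : 0 < θ) (hh : 0 < h) :
    0 ≤ auxG θ h ω ∧ auxG θ h ω ≤ auxF θ ω ∧ auxP θ (1 / h) ω ≤ auxG θ h ω ∧
    ENNReal.ofReal (auxG θ h ω) ≤
      ∑' k : {k : ℤ // k ≠ 0}, ENNReal.ofReal (auxP θ ((k.1 : ℝ) / h) ω) := by
  have S := auxF_summable θ h ω hθ hh
  have S' : Summable (fun k : {k : ℤ // k ≠ 0} => auxF θ (ω + (k.1 : ℝ) / h)) := S.subtype _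
  have hF := auxF_pos θ ω hθ
  have split := aux_tsum_split _ S
  simp only [Int.cast_zero, zero_div, add_zero] at split
  have hle : ∀ k : {k : ℤ // k ≠ 0}, auxF θ (ω + (k.1 : ℝ) / h) ≤
      ∑' k : {k : ℤ // k ≠ 0}, auxF θ (ω + (k.1 : ℝ) / h) :=
    fun k => S'.le_tsum k fun j _ => (auxF_pos _ _ hθ).le
  unfold auxG
  rw [split]
  set A := ∑' k : {k : ℤ // k ≠ 0}, auxF θ (ω + (k.1 : ℝ) / h) with hA
  have hA0 : 0 < A := (auxF_pos _ _ hθ).trans_le (hle ⟨1, one_ne_zero⟩)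
  refine ⟨by positivity, ?_, ?_, ?_⟩
  · rw [div_le_iff₀ (by positivity)]
    nlinarith
  · have h1 := hle ⟨1, one_ne_zero⟩
    simp only [Int.cast_one] at h1
    have h2 := auxF_pos θ (ω + 1 / h) hθ
    unfold auxP
    rw [div_le_div_iff₀ (by positivity) (by positivity)]
    have : 0 ≤ auxF θ ω ^ 2 * (A - auxF θ (ω + 1 / h)) :=
      mul_nonneg (by positivity) (by linarith)
    nlinarith
  · have e : auxF θ ω * A / (auxF θ ω + A) =
        ∑' k : {k : ℤ // k ≠ 0}, auxF θ ω / (auxF θ ω + A) * auxF θ (ω + (k.1 : ℝ) / h) := by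
      rw [tsum_mul_left, ← hA]; ring
    rw [e, ENNReal.ofReal_tsum_of_nonneg _ (S'.mul_left _)]
    · refine ENNReal.tsum_le_tsum fun k => ENNReal.ofReal_le_ofReal ?_
      have h1 := hle k
      have h2 := auxF_pos θ (ω + k.1 / h) hθ
      unfold auxP
      rw [div_mul_eq_mul_div]
      exact div_le_div_of_nonneg_left (by positivity) (by positivity) (by linarith)
    · intro k
      have h2 := auxF_pos θ (ω + k.1 / h) hθ
      positivity

lemma auxG_int (θ h : ℝ) (hθ : 0 < θ) (hh : 0 < h) : Integrable (auxG θ h) := by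
  refine (auxF_int θ hθ).mono' (auxG_meas θ h).aestronglyMeasurable
    (Filter.Eventually.of_forall fun ω => ?_)
  have := auxG_facts θ h ω hθ hh
  rw [norm_of_nonneg this.1]
  exact this.2.1

lemma auxG_upper (θ h : ℝ) (hθ : 0 < θ) (hh : 0 < h) :
    ∫ ω, auxG θ h ω ≤ π * h * √θ * (2 * exp (-(1 / (8 * h ^ 2 * θ))) /
      (1 - exp (-(1 / (8 * h ^ 2 * θ))))) := by
  set q := exp (-(1 / (8 * h ^ 2 * θ))) with hqd
  have hq0 : 0 < q := exp_pos _
  have hq : q < 1 := by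
    rw [hqd, exp_lt_one_iff]
    have : 0 < 1 / (8 * h ^ 2 * θ) := by positivity
    linarith
  obtain ⟨T1, T2⟩ := aux_geom_tsum q hq0.le hq
  have hR : 0 ≤ π * h * √θ * (2 * q / (1 - q)) := by
    have : 0 < 1 - q := by linarith
    positivity
  rw [← ENNReal.ofReal_le_ofReal_iff hR, ofReal_integral_eq_lintegral_ofReal (auxG_int θ h hθ hh)
    (Filter.Eventually.of_forall fun ω => (auxG_facts θ h ω hθ hh).1)]
  calc _ ≤ ∫⁻ ω, ∑' k : {k : ℤ // k ≠ 0}, ENNReal.ofReal (auxP θ ((k.1 : ℝ) / h) ω) :=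
        lintegral_mono fun ω => (auxG_facts θ h ω hθ hh).2.2.2
    _ = ∑' k : {k : ℤ // k ≠ 0}, ∫⁻ ω, ENNReal.ofReal (auxP θ ((k.1 : ℝ) / h) ω) :=
        lintegral_tsum fun k => (auxP_meas _ _).ennreal_ofReal.aemeasurable
    _ ≤ ∑' k : {k : ℤ // k ≠ 0}, ENNReal.ofReal (π * h * √θ * q ^ k.1.natAbs) := by
        refine ENNReal.tsum_le_tsum fun k => ?_
        have hk : (k.1 : ℝ) ≠ 0 := by exact_mod_cast k.2
        obtain ⟨I, J⟩ := auxP_int θ ((k.1 : ℝ) / h) hθ (by positivity)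
        rw [← ofReal_integral_eq_lintegral_ofReal I
          (Filter.Eventually.of_forall fun ω => (auxP_pos _ _ _ hθ).le)]
        refine ENNReal.ofReal_le_ofReal (J.trans ?_)
        have hk1 : (1 : ℝ) ≤ |(k.1 : ℝ)| := by
          have := Int.one_le_abs k.2
          exact_mod_cast this
        refine mul_le_mul ?_ ?_ (exp_pos _).le (by positivity)
        · rw [abs_div, abs_of_pos hh, div_div_eq_mul_div]
          calc _ ≤ π * √θ * h / 1 :=
                div_le_div_of_nonneg_left (by positivity) one_pos hk1
            _ = _ := by ring
        · rw [hqd, ← exp_nat_mul, exp_le_exp]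
          have hk2 : ((k.1.natAbs : ℕ) : ℝ) ≤ (k.1 : ℝ) ^ 2 := aux_natAbs_le_sq k.1
          have e : (k.1.natAbs : ℝ) * -(1 / (8 * h ^ 2 * θ)) - -((k.1 : ℝ) / h) ^ 2 / (8 * θ) =
            ((k.1 : ℝ) ^ 2 - (k.1.natAbs : ℝ)) / (8 * h ^ 2 * θ) := by
            field_simp
            ring
          have : 0 ≤ ((k.1 : ℝ) ^ 2 - (k.1.natAbs : ℝ)) / (8 * h ^ 2 * θ) :=
            div_nonneg (by linarith) (by positivity)
          linarith
    _ = _ := by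
        rw [← ENNReal.ofReal_tsum_of_nonneg (fun k => by positivity) (T1.mul_left _),
          tsum_mul_left, T2]

theorem squared_exponential_error_bounds :
    ∃ ε > (0 : ℝ), ∀ θ h : ℝ, 0 < θ → 0 < h → θ * h ^ 2 < ε →
      (4 / 3) * h * Real.sqrt θ * Real.exp (-(1 / (8 * h ^ 2 * θ)))
          ≤ sigmaSq h (fun ω => (1 / Real.sqrt θ) * Real.exp (-ω ^ 2 / (2 * θ))) ∧
      sigmaSq h (fun ω => (1 / Real.sqrt θ) * Real.exp (-ω ^ 2 / (2 * θ)))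
          ≤ 7 * h * Real.sqrt θ * Real.exp (-(1 / (8 * h ^ 2 * θ))) := by
  refine ⟨1 / 100, by norm_num, fun θ h hθ hh hε => ?_⟩
  have hs : 0 < √θ := sqrt_pos.2 hθ
  have hsig : sigmaSq h (fun ω => (1 / Real.sqrt θ) * Real.exp (-ω ^ 2 / (2 * θ))) =
      ∫ ω, auxG θ h ω := rfl
  rw [hsig]
  constructor
  · have h1 := auxP_lower θ (1 / h) hθ (by positivity)
    have h2 := integral_mono (auxP_int θ (1 / h) hθ (by positivity)).1 (auxG_int θ h hθ hh)
      (fun ω => (auxG_facts θ h ω hθ hh).2.2.1)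
    refine le_trans ?_ (h1.trans h2)
    have e : -(1 / h) ^ 2 / (8 * θ) = -(1 / (8 * h ^ 2 * θ)) := by field_simp
    rw [e]
    have h3 : 8 / 3 * h * θ ≤ √(π / (1 / (2 * θ) + (1 / h) ^ 2 / (8 * θ ^ 2))) := by
      apply le_sqrt_of_sq_le
      rw [le_div_iff₀ (by positivity)]
      have : (8 / 3 * h * θ) ^ 2 * (1 / (2 * θ) + (1 / h) ^ 2 / (8 * θ ^ 2)) =
          32 / 9 * (θ * h ^ 2) + 8 / 9 := by
        field_simp
        ring
      rw [this]
      linarith [pi_gt_three]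
    have hh2 : √θ * √θ = θ := mul_self_sqrt hθ.le
    calc _ = (1 / √θ * exp (-(1 / (8 * h ^ 2 * θ)))) * (1 / 2 * (8 / 3 * h * (√θ * √θ))) := by
          field_simp
          norm_num
      _ ≤ _ := by
          rw [hh2]
          gcongr
  · refine (auxG_upper θ h hθ hh).trans ?_
    set q := exp (-(1 / (8 * h ^ 2 * θ))) with hqd
    have hq0 : 0 < q := exp_pos _
    have hq : q ≤ 1 / 13 := by
      rw [hqd, exp_neg, one_div (13 : ℝ)]
      apply inv_anti₀ (by norm_num)
      have h1 := add_one_le_exp (1 / (8 * h ^ 2 * θ))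
      have h2 : 12 ≤ 1 / (8 * h ^ 2 * θ) := by
        rw [le_div_iff₀ (by positivity)]
        nlinarith
      linarith
    have h3 : 2 * π / (1 - q) ≤ 7 := by
      rw [div_le_iff₀ (by linarith)]
      linarith [pi_lt_d2]
    calc _ = (2 * π / (1 - q)) * (h * √θ * q) := by ring
      _ ≤ 7 * (h * √θ * q) := by gcongr
      _ = _ := by ring
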